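/- With the notation and hypotheses of the context (in particular τ(x₀, m₀) = 0, i.e. det X' = 0), one has the factorization γ·μ·τ(x₀ − η, m₀ + 1) = (λ₂ − λ₁)·τ(x₀, m₀ + 1)·τ(x₀ − η, m₀). -/

import Mathlib

open Matrix

/-!
Write `P = λ₁I − Z`, `Q = λ₂I − Z` and `M = X'`. The relation `[M, Z] + I = e fᵀ` turns `M − P⁻¹`,
`M + Q⁻¹` and `M − P⁻¹ + Q⁻¹`, after multiplication by `P` and `Q`, into rank one perturbations of
`P M`, `M Q` and `P M Q`, the perturbations being `−e fᵀ`, `e fᵀ` and `(λ₁ − λ₂) e fᵀ`. Since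
`det M = 0` and `adj M = v wᵀ`, the matrix determinant lemma splits each of the three determinants
into a factor `fᵀ adj(·) v` that sees only `Q` and a factor `wᵀ adj(·) e` that sees only `P`; the
four scalars that occur match up.
-/

section MatrixDeterminantLemma

variable {ι R : Type*} [Fintype ι] [DecidableEq ι] [CommRing R]

theorem det_add_vecMulVec_of_isLeftRegular_det {A : Matrix ι ι R} (hA : IsLeftRegular A.det)
    (u v : ι → R) : (A + vecMulVec u v).det = A.det + v ⬝ᵥ (A.adjugate *ᵥ u) := by
  -- The Schur complement of `1` in `bordered` is `A + u vᵀ`; multiplying by `reducer` clears the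
  -- lower left block without inverting `A`.
  let bordered : Matrix (ι ⊕ Unit) (ι ⊕ Unit) R :=
    fromBlocks A (replicateCol Unit u) (-replicateRow Unit v) 1
  let reducer : Matrix (ι ⊕ Unit) (ι ⊕ Unit) R :=
    fromBlocks A.adjugate 0 (replicateRow Unit v * A.adjugate) (A.det • 1)
  have det_bordered : bordered.det = (A + vecMulVec u v).det := by
    rw [det_fromBlocks_one₂₂, Matrix.mul_neg, sub_neg_eq_add, vecMulVec_eq Unit]
  have det_reducer : reducer.det = A.det ^ Fintype.card ι := by
    rw [det_fromBlocks_zero₁₂, det_smul, det_one, Fintype.card_unit, pow_one, mul_one, ← det_mul,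
      adjugate_mul, det_smul, det_one, mul_one]
  have reduced : reducer * bordered = fromBlocks (A.det • 1) (A.adjugate * replicateCol Unit u) 0
      (of fun _ _ => A.det + v ⬝ᵥ (A.adjugate *ᵥ u)) := by
    rw [fromBlocks_multiply]
    congr 1
    · simp [adjugate_mul]
    · simp
    · simp [Matrix.mul_assoc, adjugate_mul]
    · ext
      simp [← replicateCol_mulVec, ← mulVec_mulVec, replicateRow_mulVec_eq_const, add_comm]
  apply hA.pow (Fintype.card ι)
  simpa [det_reducer, det_bordered, det_fromBlocks_zero₂₁] using congrArg det reduced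

theorem det_add_vecMulVec (A : Matrix ι ι R) (u v : ι → R) :
    (A + vecMulVec u v).det = A.det + v ⬝ᵥ (A.adjugate *ᵥ u) := by
  -- `B = t • 1 + A` has a monic, hence regular, determinant, and `t = 0` recovers `A`.
  let evalZero : Polynomial R →+* R := Polynomial.evalRingHom 0
  let B : Matrix ι ι (Polynomial R) := (-A).charmatrix
  let u' : ι → Polynomial R := Polynomial.C ∘ u
  let v' : ι → Polynomial R := Polynomial.C ∘ v
  have hB : B.map evalZero = A := by
    ext i j
    simp [B, evalZero, charmatrix, diagonal_apply, apply_ite]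
  have hu : evalZero ∘ u' = u := by ext; simp [u', evalZero]
  have hv : evalZero ∘ v' = v := by ext; simp [v', evalZero]
  have hregular : IsLeftRegular B.det := (charpoly_monic (-A)).isRegular.left
  have hsum : (B + vecMulVec u' v').map evalZero = A + vecMulVec u v := by
    rw [Matrix.map_add _ (map_add evalZero), hB, ← hu, ← hv]
    ext
    simp [vecMulVec_apply]
  have hadj : evalZero ∘ (B.adjugate *ᵥ u') = A.adjugate *ᵥ u := by
    ext i
    rw [Function.comp_apply, RingHom.map_mulVec, ← RingHom.mapMatrix_apply,
      RingHom.map_adjugate, RingHom.mapMatrix_apply, hB, hu]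
  calc (A + vecMulVec u v).det = evalZero (B + vecMulVec u' v').det := by
        rw [RingHom.map_det, RingHom.mapMatrix_apply, hsum]
    _ = evalZero (B.det + v' ⬝ᵥ (B.adjugate *ᵥ u')) := by
        rw [det_add_vecMulVec_of_isLeftRegular_det hregular]
    _ = A.det + v ⬝ᵥ (A.adjugate *ᵥ u) := by
        rw [map_add, RingHom.map_det, RingHom.mapMatrix_apply, hB, RingHom.map_dotProduct, hv,
          hadj]

theorem det_mul_mul_add_vecMulVec {M : Matrix ι ι R} {v w : ι → R} (hM : M.det = 0)
    (hadj : M.adjugate = vecMulVec v w) (A B : Matrix ι ι R) (e f : ι → R) :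
    (A * M * B + vecMulVec e f).det = (f ⬝ᵥ (B.adjugate *ᵥ v)) * (w ⬝ᵥ (A.adjugate *ᵥ e)) := by
  rw [det_add_vecMulVec, det_mul, det_mul, hM, mul_zero, zero_mul, zero_add, adjugate_mul_distrib,
    adjugate_mul_distrib, hadj, ← mulVec_mulVec, ← mulVec_mulVec, vecMulVec_mulVec, mulVec_smul,
    op_smul_eq_smul, dotProduct_smul, smul_eq_mul, mul_comm]

end MatrixDeterminantLemma

section Ring

variable {A : Type*} [Ring A] {M E : A} {P Q : Aˣ}

theorem sub_inv_mul_eq_mul_sub (hP : M * P = P * M + 1 - E) : (M - ↑P⁻¹) * P = P * M - E := by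
  rw [sub_mul, Units.inv_mul, hP]
  abel

theorem mul_add_inv_eq_mul_add (hQ : M * Q = Q * M + 1 - E) : Q * (M + ↑Q⁻¹) = M * Q + E := by
  rw [mul_add, Units.mul_inv, hQ]
  abel

theorem mul_sub_inv_add_inv_mul_eq (hP : M * P = P * M + 1 - E) (hQ : M * Q = Q * M + 1 - E)
    (hPQ : Commute P Q) : Q * (M - ↑P⁻¹ + ↑Q⁻¹) * P = P * M * Q + E * (P - Q) := by
  have hPQ' : (P * Q : A) = Q * P := congrArg Units.val hPQ
  calc Q * (M - ↑P⁻¹ + ↑Q⁻¹) * P = Q * M * P - Q + P := by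
        simp [mul_add, mul_sub, add_mul, sub_mul, mul_assoc]
    _ = (M * Q - 1 + E) * P - Q + P := by rw [hQ]; noncomm_ring
    _ = M * P * Q + E * P - Q := by rw [mul_assoc M P, hPQ']; noncomm_ring
    _ = P * M * Q + E * (P - Q) := by rw [hP]; noncomm_ring

theorem mul_smul_one_sub_eq_of_commutator {S : Type*} [CommSemiring S] [Algebra S A] {Z : A}
    (h : M * Z - Z * M + 1 = E) (r : S) :
    M * (r • 1 - Z) = (r • 1 - Z) * M + 1 - E := by
  rw [← h, mul_sub, sub_mul, mul_smul_comm, smul_mul_assoc, mul_one, one_mul]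
  abel

end Ring

section RankOneCommutator

variable {ι R : Type*} [Fintype ι] [DecidableEq ι] [CommRing R]
  {M : Matrix ι ι R} {P Q : (Matrix ι ι R)ˣ} {e f v w : ι → R}

theorem det_mul_det_sub_inv (hM : M.det = 0) (hadj : M.adjugate = vecMulVec v w)
    (hP : M * P = P * M + 1 - vecMulVec e f) :
    P.val.det * (M - ↑P⁻¹).det = -((f ⬝ᵥ v) * (w ⬝ᵥ (P.val.adjugate *ᵥ e))) := by
  have h := det_mul_mul_add_vecMulVec hM hadj P.val 1 (-e) f
  rwa [mul_one, neg_vecMulVec, ← sub_eq_add_neg, ← sub_inv_mul_eq_mul_sub hP, det_mul, mul_comm,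
    adjugate_one, one_mulVec, mulVec_neg, dotProduct_neg, mul_neg] at h

theorem det_mul_det_add_inv (hM : M.det = 0) (hadj : M.adjugate = vecMulVec v w)
    (hQ : M * Q = Q * M + 1 - vecMulVec e f) :
    Q.val.det * (M + ↑Q⁻¹).det = (f ⬝ᵥ (Q.val.adjugate *ᵥ v)) * (w ⬝ᵥ e) := by
  have h := det_mul_mul_add_vecMulVec hM hadj 1 Q.val e f
  rwa [one_mul, ← mul_add_inv_eq_mul_add hQ, det_mul, adjugate_one, one_mulVec] at h

theorem det_mul_det_sub_inv_add_inv (hM : M.det = 0) (hadj : M.adjugate = vecMulVec v w)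
    (hP : M * P = P * M + 1 - vecMulVec e f) (hQ : M * Q = Q * M + 1 - vecMulVec e f)
    {c : R} (hPQ : Q.val = P + c • 1) :
    P.val.det * Q.val.det * (M - ↑P⁻¹ + ↑Q⁻¹).det =
      -c * ((f ⬝ᵥ (Q.val.adjugate *ᵥ v)) * (w ⬝ᵥ (P.val.adjugate *ᵥ e))) := by
  have hcomm : Commute P Q := by
    ext1
    simp [hPQ, add_mul, mul_add]
  have hdiff : vecMulVec e f * (P.val - Q) = vecMulVec (-c • e) f := by
    rw [hPQ, sub_add_cancel_left, ← neg_smul, mul_smul_comm, mul_one, smul_vecMulVec]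
  have h := det_mul_mul_add_vecMulVec hM hadj P.val Q.val (-c • e) f
  rw [← hdiff, ← mul_sub_inv_add_inv_mul_eq hP hQ hcomm, det_mul, det_mul, mulVec_smul,
    dotProduct_smul, smul_eq_mul] at h
  linear_combination h

theorem det_sub_inv_add_inv_factorization (hM : M.det = 0) (hadj : M.adjugate = vecMulVec v w)
    (hP : M * P = P * M + 1 - vecMulVec e f) (hQ : M * Q = Q * M + 1 - vecMulVec e f)
    {c : R} (hPQ : Q.val = P + c • 1) :
    (w ⬝ᵥ e) * (f ⬝ᵥ v) * (M - ↑P⁻¹ + ↑Q⁻¹).det =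
      c * (M + ↑Q⁻¹).det * (M - ↑P⁻¹).det := by
  have hPdet : IsUnit P.val.det := (isUnit_iff_isUnit_det _).mp P.isUnit
  have hQdet : IsUnit Q.val.det := (isUnit_iff_isUnit_det _).mp Q.isUnit
  apply (hPdet.mul hQdet).mul_left_cancel
  linear_combination (w ⬝ᵥ e) * (f ⬝ᵥ v) * det_mul_det_sub_inv_add_inv hM hadj hP hQ hPQ
    - c * (P.val.det * (M - ↑P⁻¹).det) * det_mul_det_add_inv hM hadj hQ
    - c * ((f ⬝ᵥ (Q.val.adjugate *ᵥ v)) * (w ⬝ᵥ e)) * det_mul_det_sub_inv hM hadj hP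

theorem tau_factorization_down_general (X : Matrix ι ι R) {Z : Matrix ι ι R} (η : Rˣ)
    {lam₁ lam₂ : R} (hlam₁ : lam₁ ∉ spectrum R Z) (hlam₂ : lam₂ ∉ spectrum R Z)
    {τ : R → R → R}
    (hτ : ∀ x m : R, τ x m =
      (X + (x /ₚ η) • (lam₁ • (1 : Matrix ι ι R) - Z)⁻¹ +
        m • (lam₂ • (1 : Matrix ι ι R) - Z)⁻¹).det)
    {x₀ m₀ : R} (hroot : τ x₀ m₀ = 0) {X' : Matrix ι ι R}
    (hX' : X' = X + (x₀ /ₚ η) • (lam₁ • (1 : Matrix ι ι R) - Z)⁻¹ +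
        m₀ • (lam₂ • (1 : Matrix ι ι R) - Z)⁻¹)
    {e f v w : ι → R} (hef : X' * Z - Z * X' + 1 = vecMulVec e f)
    (hvw : X'.adjugate = vecMulVec v w) :
    (w ⬝ᵥ e) * (f ⬝ᵥ v) * τ (x₀ - η) (m₀ + 1) =
      (lam₂ - lam₁) * τ x₀ (m₀ + 1) * τ (x₀ - η) m₀ := by
  rw [spectrum.notMem_iff, Algebra.algebraMap_eq_smul_one] at hlam₁ hlam₂
  obtain ⟨P, hP⟩ := hlam₁
  obtain ⟨Q, hQ⟩ := hlam₂
  have hdet : X'.det = 0 := by rw [hX', ← hτ, hroot]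
  have hτ_shift (a b : R) :
      τ (x₀ - a * η) (m₀ + b) = (X' - a • P.val⁻¹ + b • Q.val⁻¹).det := by
    rw [hτ, hX', ← hP, ← hQ, divp, sub_mul, Units.mul_inv_cancel_right, ← divp]
    congr 1
    module
  have hτ₁₁ : τ (x₀ - η) (m₀ + 1) = (X' - ↑P⁻¹ + ↑Q⁻¹).det := by simpa using hτ_shift 1 1
  have hτ₀₁ : τ x₀ (m₀ + 1) = (X' + ↑Q⁻¹).det := by simpa using hτ_shift 0 1
  have hτ₁₀ : τ (x₀ - η) m₀ = (X' - ↑P⁻¹).det := by simpa using hτ_shift 1 0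
  have hPQ : Q.val = P + (lam₂ - lam₁) • 1 := by
    rw [hP, hQ]
    module
  rw [hτ₁₁, hτ₀₁, hτ₁₀]
  exact det_sub_inv_add_inv_factorization hdet hvw
    (hP ▸ mul_smul_one_sub_eq_of_commutator hef lam₁)
    (hQ ▸ mul_smul_one_sub_eq_of_commutator hef lam₂) hPQ

end RankOneCommutator

/-- factorization `γ·μ·τ(x₀ − η, m₀ + 1) = (λ₂ − λ₁)·τ(x₀, m₀ + 1)·τ(x₀ − η, m₀)`. -/
theorem tau_factorization_down (n : ℕ) (hn : 1 ≤ n)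
    (X Z : Matrix (Fin n) (Fin n) ℂ)
    (hrank : (X * Z - Z * X + 1).rank = 1)
    (η : ℂ) (hη : η ≠ 0)
    (lam₁ lam₂ : ℂ)
    (hlam₁ : lam₁ ∉ spectrum ℂ Z) (hlam₂ : lam₂ ∉ spectrum ℂ Z)
    (τ : ℂ → ℂ → ℂ)
    (hτ : ∀ x m : ℂ, τ x m =
      (X + (x / η) • (lam₁ • (1 : Matrix (Fin n) (Fin n) ℂ) - Z)⁻¹ +
        m • (lam₂ • (1 : Matrix (Fin n) (Fin n) ℂ) - Z)⁻¹).det)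
    (x₀ m₀ : ℂ) (hroot : τ x₀ m₀ = 0)
    (X' : Matrix (Fin n) (Fin n) ℂ)
    (hX' : X' = X + (x₀ / η) • (lam₁ • (1 : Matrix (Fin n) (Fin n) ℂ) - Z)⁻¹ +
        m₀ • (lam₂ • (1 : Matrix (Fin n) (Fin n) ℂ) - Z)⁻¹)
    (hrank' : (X' * Z - Z * X' + 1).rank = 1)
    (e f v w : Fin n → ℂ)
    (hef : X' * Z - Z * X' + 1 = vecMulVec e f)
    (hvw : X'.adjugate = vecMulVec v w) :
    (w ⬝ᵥ e) * (f ⬝ᵥ v) * τ (x₀ - η) (m₀ + 1) =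
      (lam₂ - lam₁) * τ x₀ (m₀ + 1) * τ (x₀ - η) m₀ := by
  exact tau_factorization_down_general X (Units.mk0 η hη) hlam₁ hlam₂
    (by simpa only [divp_mk0] using hτ) hroot (by simpa only [divp_mk0] using hX') hef hvw
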